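/- arXiv:1009.3129 — 2 statements merged into one kernel-verified Lean document; each statement's English description precedes it below -/
import Mathlib

section
/- Let (X,F,μ) be a probability space, T: X → X an ergodic measure-preserving transformation, and {f_n} a sequence of non-negative measurable functions with sup_x f_1(x) < ∞ and f_{n+m}(x) ≤ f_m(x) f_n(T^m x) for all n, m, x. Set α = lim_n (1/n)∫ log f_n dμ. If α ≠ −∞, then for every ε > 0 and μ-a.e. x there exists n_0(x) such that |log f_n(T^m x) − nα| ≤ (n+m)ε for all n ≥ n_0(x) and all m ∈ ℕ. -/
open MeasureTheory Filter
open scoped ENNReal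

/-- `log` with the convention `log x = -∞` for `x ≤ 0`. -/
noncomputable def elog (x : ℝ) : EReal := ENNReal.log (ENNReal.ofReal x)

/-- The positive part of an extended real, as an extended nonnegative real. -/
noncomputable def epos (e : EReal) : ℝ≥0∞ := if e = ⊤ then ⊤ else ENNReal.ofReal e.toReal

/-- Integral of an `EReal`-valued function (difference of the integrals of the positive
and negative parts), allowing the value `-∞`. -/
noncomputable def eintegral {X : Type*} [MeasurableSpace X] (μ : Measure X)
    (g : X → EReal) : EReal :=
  ((∫⁻ x, epos (g x) ∂μ : ℝ≥0∞) : EReal) - ((∫⁻ x, epos (-(g x)) ∂μ : ℝ≥0∞) : EReal)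

theorem MeasureTheory.MeasurePreserving.ae_forall_iterate {X : Type*} [MeasurableSpace X]
    {μ : Measure X} {T : X → X} (hT : MeasurePreserving T μ μ) {p : X → Prop}
    (hp : ∀ᵐ x ∂μ, p x) : ∀ᵐ x ∂μ, ∀ i : ℕ, p (T^[i] x) :=
  ae_all_iff.2 fun i => (hT.iterate i).quasiMeasurePreserving.ae hp

theorem MeasureTheory.MeasurePreserving.integrable_birkhoffSum {X : Type*} [MeasurableSpace X]
    {μ : Measure X} {T : X → X} (hT : MeasurePreserving T μ μ) {φ : X → ℝ}
    (hφ : Integrable φ μ) (n : ℕ) : Integrable (birkhoffSum T φ n) μ :=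
  integrable_finsetSum _ fun i _ => (hT.iterate i).integrable_comp_of_integrable hφ

theorem MeasureTheory.MeasurePreserving.integral_birkhoffSum {X : Type*} [MeasurableSpace X]
    {μ : Measure X} {T : X → X} (hT : MeasurePreserving T μ μ) {φ : X → ℝ}
    (hφ : Integrable φ μ) (n : ℕ) : ∫ x, birkhoffSum T φ n x ∂μ = n * ∫ x, φ x ∂μ := by
  have key : ∀ i : ℕ, ∫ x, φ (T^[i] x) ∂μ = ∫ x, φ x ∂μ := fun i => by
    have h := hT.iterate i
    conv_rhs => rw [← h.map_eq]
    rw [integral_map h.measurable.aemeasurable]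
    rw [h.map_eq]; exact hφ.aestronglyMeasurable
  simp only [birkhoffSum]
  rw [integral_finsetSum (f := fun i x => φ (T^[i] x)) _ fun i _ =>
    (hT.iterate i).integrable_comp_of_integrable hφ]
  simp [key]

/-- A nonpositive subadditive process along the orbits of `T`, almost everywhere. -/
structure NonposSubadditive {X : Type*} [MeasurableSpace X] (μ : Measure X) (T : X → X)
    (h : ℕ → X → ℝ) : Prop where
  measurable : ∀ n, Measurable (h n)
  nonpos : ∀ᵐ x ∂μ, ∀ n, 1 ≤ n → h n x ≤ 0
  subadd : ∀ᵐ x ∂μ, ∀ m n, 1 ≤ m → 1 ≤ n → h (n + m) x ≤ h m x + h n (T^[m] x)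

/-- The orbit of `x` is cut into blocks of length at most `N` on which `h` has slope at most `s`,
and single steps at the points of `B`. -/
theorem le_mul_sub_birkhoffSum_indicator {X : Type*} {T : X → X} {h : ℕ → X → ℝ} {B : Set X}
    {s : ℝ} (hs : s ≤ 0) {N : ℕ} (n : ℕ) : ∀ x : X, 1 ≤ n →
    (∀ i n, 1 ≤ n → h n (T^[i] x) ≤ 0) →
    (∀ i m n, 1 ≤ m → 1 ≤ n → h (n + m) (T^[i] x) ≤ h m (T^[i] x) + h n (T^[m] (T^[i] x))) →
    (∀ y, y ∉ B → ∃ k, 1 ≤ k ∧ k ≤ N ∧ h k y ≤ k * s) →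
    h n x ≤ s * (n - N - birkhoffSum T (B.indicator fun _ => (1 : ℝ)) n x) := by
  classical
  induction n using Nat.strong_induction_on with
  | _ n ih =>
    intro x hn hneg hsub hB
    have hSnn : ∀ k y, 0 ≤ birkhoffSum T (B.indicator fun _ => (1 : ℝ)) k y := fun k y =>
      Finset.sum_nonneg fun i _ => Set.indicator_nonneg (fun _ _ => zero_le_one) _
    have hshift : ∀ k, k < n → 1 ≤ k → h (n - k) (T^[k] x) ≤
        s * ((n - k : ℕ) - N - birkhoffSum T (B.indicator fun _ => (1 : ℝ)) (n - k) (T^[k] x)) := by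
      intro k hk hk1
      refine ih (n - k) (by omega) _ (by omega) (fun i m hm => ?_) (fun i m l hm hl => ?_) hB
      · rw [← Function.iterate_add_apply]; exact hneg _ _ hm
      · rw [← Function.iterate_add_apply T i k]; exact hsub _ _ _ hm hl
    rcases le_or_gt n N with hnN | hnN
    · have h1 := hneg 0 n hn
      have h2 : (n : ℝ) ≤ N := by exact_mod_cast hnN
      have h3 := hSnn n x
      refine h1.trans (mul_nonneg_of_nonpos_of_nonpos hs (by linarith))
    by_cases hx : x ∈ B
    · rcases Nat.eq_or_lt_of_le hn with rfl | hn1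
      · have h1 := hneg 0 1 le_rfl
        refine h1.trans (mul_nonneg_of_nonpos_of_nonpos hs ?_)
        simp [birkhoffSum_one, hx]
      · have h1 := hshift 1 hn1 le_rfl
        have h2 := hsub 0 1 (n - 1) le_rfl (by omega)
        have h3 := hneg 0 1 le_rfl
        obtain ⟨k, rfl⟩ : ∃ k, n = k + 1 := ⟨n - 1, by omega⟩
        rw [birkhoffSum_succ']
        simp only [Function.iterate_zero, id, Function.iterate_one, Nat.add_sub_cancel,
          Set.indicator_of_mem hx] at h1 h2 h3 ⊢
        push_cast
        linarith
    · obtain ⟨k, hk1, hkN, hk⟩ := hB x hx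
      have h1 := hshift k (by omega) hk1
      have h2 := hsub 0 k (n - k) hk1 (by omega)
      have h4 : n - k + k = n := by omega
      have h5 : birkhoffSum T (B.indicator fun _ => (1 : ℝ)) n x =
          birkhoffSum T (B.indicator fun _ => (1 : ℝ)) k x +
          birkhoffSum T (B.indicator fun _ => (1 : ℝ)) (n - k) (T^[k] x) := by
        rw [← birkhoffSum_add]; congr 1; omega
      have h6 := hSnn k x
      have h7 : ((n - k : ℕ) : ℝ) = n - k := Nat.cast_sub (by omega)
      rw [h4] at h2
      rw [h7] at h1
      simp only [Function.iterate_zero, id] at h2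
      rw [h5]
      nlinarith [mul_nonpos_of_nonpos_of_nonneg hs h6]

/-- The lower half of Kingman's theorem for nonpositive processes. -/
theorem NonposSubadditive.ae_exists_lower_bound {X : Type*} [MeasurableSpace X] {μ : Measure X}
    [IsProbabilityMeasure μ] {T : X → X} (hT : Ergodic T μ) {h : ℕ → X → ℝ}
    (hh : NonposSubadditive μ T h) {a : ℝ} (hint : ∀ n, 1 ≤ n → Integrable (h n) μ)
    (ha : ∀ n : ℕ, 1 ≤ n → n * a ≤ ∫ x, h n x ∂μ) {s : ℝ} (hs : s < a) :
    ∀ᵐ x ∂μ, ∃ M : ℕ, ∀ n : ℕ, 1 ≤ n → n * s - M ≤ h n x := by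
  have hmp := hT.toMeasurePreserving
  have ha0 : a ≤ 0 := by
    have h1 := ha 1 le_rfl
    have h2 : ∫ x, h 1 x ∂μ ≤ 0 := integral_nonpos_of_ae <| by
      filter_upwards [hh.nonpos] with x hx using hx 1 le_rfl
    simpa using h1.trans h2
  have hs0 : s < 0 := hs.trans_le ha0
  let U : Set X := {x | ∀ M : ℕ, ∃ n : ℕ, 1 ≤ n ∧ h n x < n * s - M}
  have hU : MeasurableSet U := by
    have : U = ⋂ M : ℕ, ⋃ n : ℕ, ⋃ _ : 1 ≤ n, {x | h n x < n * s - M} := by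
      ext x; simp [U]
    rw [this]
    exact .iInter fun M => .iUnion fun n => .iUnion fun _ =>
      measurableSet_lt (hh.measurable n) measurable_const
  have hinv : T ⁻¹' U ≤ᵐ[μ] U := by
    filter_upwards [hh.nonpos, hh.subadd] with x hx1 hx2 hx M
    obtain ⟨n, hn, hlt⟩ := hx (M + ⌈-s⌉₊)
    have h1 := hx2 1 n le_rfl hn
    have h2 := hx1 1 le_rfl
    have h3 := Nat.le_ceil (-s)
    refine ⟨n + 1, by omega, ?_⟩
    simp only [Function.iterate_one] at h1
    push_cast at hlt ⊢
    linarith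
  rcases hT.ae_empty_or_univ_of_preimage_ae_le hU.nullMeasurableSet hinv with hemp | huniv
  · filter_upwards [ae_eq_empty.1 hemp |> measure_eq_zero_iff_ae_notMem.1] with x hx
    simpa [U] using hx
  exfalso
  let B : ℕ → Set X := fun N => {x | ∀ k : ℕ, 1 ≤ k → k ≤ N → k * s < h k x}
  have hB : ∀ N, MeasurableSet (B N) := fun N => by
    have : B N = ⋂ k : ℕ, ⋂ _ : 1 ≤ k, ⋂ _ : k ≤ N, {x | k * s < h k x} := by
      ext x; simp [B]
    rw [this]
    exact .iInter fun k => .iInter fun _ => .iInter fun _ =>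
      measurableSet_lt measurable_const (hh.measurable k)
  have hanti : Antitone B := fun N N' hNN' x hx k hk hkN => hx k hk (hkN.trans hNN')
  have hlim : Tendsto (fun N => μ.real (B N)) atTop (nhds 0) := by
    have h1 : μ (⋂ N, B N) = 0 := by
      rw [measure_eq_zero_iff_ae_notMem]
      filter_upwards [eventuallyEq_univ.1 huniv] with x hx hx'
      obtain ⟨n, hn, hlt⟩ := hx 0
      have := Set.mem_iInter.1 hx' n n hn le_rfl
      simp only [Nat.cast_zero, sub_zero] at hlt
      exact lt_asymm this hlt
    have h2 := MeasureTheory.tendsto_measure_iInter_atTop (μ := μ)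
      (fun N => (hB N).nullMeasurableSet) hanti ⟨0, measure_ne_top _ _⟩
    rw [h1] at h2
    exact (ENNReal.tendsto_toReal ENNReal.zero_ne_top).comp h2
  have hbound : ∀ N, a ≤ s * (1 - μ.real (B N)) := by
    intro N
    have hind : Integrable ((B N).indicator fun _ => (1 : ℝ)) μ :=
      (integrable_const 1).indicator (hB N)
    have hn : ∀ n : ℕ, 1 ≤ n → n * a ≤ s * (n - N - n * μ.real (B N)) := by
      intro n hn
      refine (ha n hn).trans ?_
      have h1 : ∫ x, h n x ∂μ ≤
          ∫ x, s * (n - N - birkhoffSum T ((B N).indicator fun _ => (1 : ℝ)) n x) ∂μ := by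
        refine integral_mono_ae (hint n hn) (((integrable_const _).sub
          (hmp.integrable_birkhoffSum hind n)).const_mul s) ?_
        filter_upwards [hmp.ae_forall_iterate hh.nonpos, hmp.ae_forall_iterate hh.subadd]
          with x hx1 hx2
        refine le_mul_sub_birkhoffSum_indicator hs0.le n x hn hx1 hx2 fun y hy => ?_
        simpa [B] using hy
      rw [integral_const_mul, integral_sub (integrable_const _)
        (hmp.integrable_birkhoffSum hind n), hmp.integral_birkhoffSum hind,
        integral_indicator_const _ (hB N)] at h1
      simpa using h1
    by_contra! hlt
    obtain ⟨n, hn'⟩ := exists_nat_gt ((-s * N) / (a - s * (1 - μ.real (B N))))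
    rw [div_lt_iff₀ (by linarith)] at hn'
    rcases Nat.eq_zero_or_pos n with rfl | hpos
    · have : 0 ≤ -s * N := by have : (0 : ℝ) ≤ N := Nat.cast_nonneg N
                              nlinarith
      simp only [Nat.cast_zero, zero_mul] at hn'
      linarith
    · linarith [hn n hpos]
  have h3 : Tendsto (fun N => s * (1 - μ.real (B N))) atTop (nhds (s * (1 - 0))) :=
    (hlim.const_sub 1).const_mul s
  have := ge_of_tendsto' h3 hbound
  linarith

theorem nonposSubadditive_birkhoffSum {X : Type*} [MeasurableSpace X] {μ : Measure X}
    {T : X → X} (hT : MeasurePreserving T μ μ) {φ : X → ℝ} (hφ : Measurable φ)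
    (hφ0 : ∀ᵐ x ∂μ, φ x ≤ 0) : NonposSubadditive μ T (birkhoffSum T φ) where
  measurable n := Finset.measurable_fun_sum _ fun i _ => hφ.comp (hT.iterate i).measurable
  nonpos := by
    filter_upwards [hT.ae_forall_iterate hφ0] with x hx n _
    exact Finset.sum_nonpos fun i _ => hx i
  subadd := .of_forall fun x m n _ _ => by rw [add_comm n m, birkhoffSum_add]

/-- Birkhoff's ergodic theorem for nonpositive functions, lower half. -/
theorem Ergodic.ae_exists_le_birkhoffSum {X : Type*} [MeasurableSpace X] {μ : Measure X}
    [IsProbabilityMeasure μ] {T : X → X} (hT : Ergodic T μ) {φ : X → ℝ} (hφ : Measurable φ)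
    (hφ0 : ∀ᵐ x ∂μ, φ x ≤ 0) (hint : Integrable φ μ) {δ : ℝ} (hδ : 0 < δ) :
    ∀ᵐ x ∂μ, ∃ M : ℕ, ∀ n : ℕ, n * (∫ x, φ x ∂μ - δ) - M ≤ birkhoffSum T φ n x := by
  have hmp := hT.toMeasurePreserving
  filter_upwards [(nonposSubadditive_birkhoffSum hmp hφ hφ0).ae_exists_lower_bound hT
    (fun n _ => hmp.integrable_birkhoffSum hint n)
    (fun n _ => (hmp.integral_birkhoffSum hint n).ge) (sub_lt_self _ hδ)] with x ⟨M, hM⟩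
  refine ⟨M, fun n => ?_⟩
  rcases Nat.eq_zero_or_pos n with rfl | hn
  · simp
  · exact hM n hn

/-- Birkhoff's ergodic theorem for nonpositive functions, upper half. -/
theorem Ergodic.ae_exists_birkhoffSum_le {X : Type*} [MeasurableSpace X] {μ : Measure X}
    [IsProbabilityMeasure μ] {T : X → X} (hT : Ergodic T μ) {φ : X → ℝ} (hφ : Measurable φ)
    (hφ0 : ∀ᵐ x ∂μ, φ x ≤ 0) (hint : Integrable φ μ) {δ : ℝ} (hδ : 0 < δ) :
    ∀ᵐ x ∂μ, ∃ M : ℕ, ∀ n : ℕ, birkhoffSum T φ n x ≤ n * (∫ x, φ x ∂μ + δ) + M := by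
  have htrunc : Tendsto (fun k : ℕ => ∫ x, max (φ x) (-(k : ℝ)) ∂μ) atTop
      (nhds (∫ x, φ x ∂μ)) := by
    refine MeasureTheory.tendsto_integral_of_dominated_convergence (fun x => |φ x|)
      (fun k => (hφ.max measurable_const).aestronglyMeasurable) hint.abs (fun k => ?_) ?_
    · filter_upwards [hφ0] with x hx
      rw [Real.norm_eq_abs, abs_of_nonpos (max_le hx (by simp)), abs_of_nonpos hx]
      exact neg_le_neg (le_max_left _ _)
    · refine .of_forall fun x => tendsto_const_nhds.congr' ?_
      filter_upwards [eventually_ge_atTop ⌈-φ x⌉₊] with k hk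
      rw [max_eq_left]
      have := Nat.ceil_le.1 hk
      linarith
  obtain ⟨k, hk⟩ := (htrunc.eventually_lt_const
    (show ∫ x, φ x ∂μ < ∫ x, φ x ∂μ + δ / 2 by linarith)).exists
  have hmi : Integrable (fun x => max (φ x) (-(k : ℝ))) μ := hint.sup (integrable_const _)
  have hlow := hT.ae_exists_le_birkhoffSum (φ := fun x => -max (φ x) (-(k : ℝ)) - k)
    ((hφ.max measurable_const).neg.sub_const _)
    (.of_forall fun x => by have := le_max_right (φ x) (-(k : ℝ)); linarith)
    (hmi.neg.sub (integrable_const _)) (half_pos hδ)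
  have hval : ∫ x, (-max (φ x) (-(k : ℝ)) - k) ∂μ = -∫ x, max (φ x) (-(k : ℝ)) ∂μ - k := by
    have hneg : Integrable (fun x => -max (φ x) (-(k : ℝ))) μ := hmi.neg
    rw [integral_sub hneg (integrable_const _), integral_neg]; simp
  filter_upwards [hlow] with x ⟨M, hM⟩
  refine ⟨M, fun n => ?_⟩
  have h1 := hM n
  rw [hval] at h1
  have h2 : birkhoffSum T φ n x ≤
      -(birkhoffSum T (fun x => -max (φ x) (-(k : ℝ)) - k) n x) - n * k := by
    simp only [birkhoffSum, Finset.sum_sub_distrib, Finset.sum_neg_distrib,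
      Finset.sum_const, Finset.card_range, nsmul_eq_mul]
    have := Finset.sum_le_sum fun i (_ : i ∈ Finset.range n) =>
      le_max_left (φ (T^[i] x)) (-(k : ℝ))
    linarith
  have h3 : (0 : ℝ) ≤ n := Nat.cast_nonneg n
  nlinarith

/-- A nonpositive subadditive array is bounded by any disjoint collection of adjacent blocks. -/
theorem le_sum_of_subadditive_array {H : ℕ → ℕ → ℝ} (hneg : ∀ i n, 1 ≤ n → H i n ≤ 0)
    (hsub : ∀ i m n, 1 ≤ m → 1 ≤ n → H i (n + m) ≤ H i m + H (i + m) n) {N : ℕ} (hN : 1 ≤ N)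
    (q : ℕ) : ∀ i n, 1 ≤ n → q * N ≤ n → H i n ≤ ∑ j ∈ Finset.range q, H (i + j * N) N := by
  induction q with
  | zero => intro i n hn _; simpa using hneg i n hn
  | succ q ih =>
    intro i n hn hq
    rw [Finset.sum_range_succ']
    have hq' : q * N + N ≤ n := by rwa [Nat.succ_mul] at hq
    rcases Nat.eq_or_lt_of_le (show N ≤ n by omega) with rfl | hlt
    · have : q = 0 := by
        by_contra h
        have : N ≤ q * N := Nat.le_mul_of_pos_left _ (Nat.pos_of_ne_zero h)
        omega
      simp [this]
    · have h1 := hsub i N (n - N) hN (by omega)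
      rw [Nat.sub_add_cancel hlt.le] at h1
      have h2 := ih (i + N) (n - N) (by omega) (by omega)
      have h3 : ∀ j, i + N + j * N = i + (j + 1) * N := fun j => by ring
      simp only [h3] at h2
      simp only [zero_mul, add_zero]
      linarith

theorem sum_range_sum_range_add_mul (F : ℕ → ℝ) (N q : ℕ) :
    ∑ r ∈ Finset.range N, ∑ j ∈ Finset.range q, F (r + j * N) =
      ∑ k ∈ Finset.range (q * N), F k := by
  induction q with
  | zero => simp
  | succ q ih =>
    simp only [Finset.sum_range_succ, Finset.sum_add_distrib, ih]
    rw [Nat.succ_mul, Finset.sum_range_add]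
    simp only [add_comm (q * N)]

theorem mul_le_sum_of_subadditive_array {H : ℕ → ℕ → ℝ} (hneg : ∀ i n, 1 ≤ n → H i n ≤ 0)
    (hsub : ∀ i m n, 1 ≤ m → 1 ≤ n → H i (n + m) ≤ H i m + H (i + m) n) {N : ℕ} (hN : 1 ≤ N)
    {q i n : ℕ} (hq : (q + 1) * N ≤ n) :
    N * H i n ≤ ∑ k ∈ Finset.range (q * N), H (i + k) N := by
  have hn : q * N + N ≤ n := by rwa [Nat.succ_mul] at hq
  rw [← sum_range_sum_range_add_mul fun k => H (i + k) N]
  calc (N : ℝ) * H i n = ∑ _r ∈ Finset.range N, H i n := by simp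
    _ ≤ _ := Finset.sum_le_sum fun r hr => ?_
  rw [Finset.mem_range] at hr
  have h1 := le_sum_of_subadditive_array hneg hsub hN q (i + r) (n - r) (by omega) (by omega)
  simp only [add_assoc] at h1
  refine le_trans ?_ h1
  rcases Nat.eq_zero_or_pos r with rfl | hr0
  · simp
  · have h2 := hsub i r (n - r) hr0 (by omega)
    rw [Nat.sub_add_cancel (by omega)] at h2
    linarith [hneg i r hr0]

/-- A uniform version along orbits of the upper half of Kingman's theorem. -/
theorem NonposSubadditive.ae_exists_upper_bound {X : Type*} [MeasurableSpace X] {μ : Measure X}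
    [IsProbabilityMeasure μ] {T : X → X} (hT : Ergodic T μ) {h : ℕ → X → ℝ}
    (hh : NonposSubadditive μ T h) {N : ℕ} (hN : 1 ≤ N) (hint : Integrable (h N) μ)
    {a : ℝ} (ha : ∫ x, h N x ∂μ ≤ N * a) {δ : ℝ} (hδ : 0 < δ) :
    ∀ᵐ x ∂μ, ∃ E : ℝ, ∀ n m : ℕ, 1 ≤ n → h n (T^[m] x) ≤ n * a + (n + m) * δ + E := by
  have hmp := hT.toMeasurePreserving
  have hN0 : (0 : ℝ) < N := by exact_mod_cast hN
  have hN1 : (1 : ℝ) ≤ N := by exact_mod_cast hN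
  have hnegN : ∀ᵐ x ∂μ, h N x ≤ 0 := by
    filter_upwards [hh.nonpos] with x hx using hx N hN
  have hδ2 : 0 < δ / 2 := half_pos hδ
  filter_upwards [hT.ae_exists_le_birkhoffSum (hh.measurable N) hnegN hint hδ2,
    hT.ae_exists_birkhoffSum_le (hh.measurable N) hnegN hint hδ2,
    hmp.ae_forall_iterate hh.nonpos, hmp.ae_forall_iterate hh.subadd]
    with x ⟨M₁, h₁⟩ ⟨M₂, h₂⟩ hneg hsub
  refine ⟨2 * N * |a| + M₁ + M₂, fun n m hn => ?_⟩
  have hM₁ : (0 : ℝ) ≤ M₁ := Nat.cast_nonneg _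
  have hM₂ : (0 : ℝ) ≤ M₂ := Nat.cast_nonneg _
  have hn0 : (0 : ℝ) ≤ n := Nat.cast_nonneg _
  have hm0 : (0 : ℝ) ≤ m := Nat.cast_nonneg _
  set c := ∫ x, h N x ∂μ
  have hc0 : c ≤ 0 := integral_nonpos_of_ae hnegN
  have hnm : 0 ≤ (n + m) * δ := by positivity
  rcases lt_or_ge n (2 * N) with hlt | hge
  · have h3 : (n : ℝ) ≤ 2 * N := by exact_mod_cast hlt.le
    have h4 : n * |a| ≤ 2 * N * |a| := mul_le_mul_of_nonneg_right h3 (abs_nonneg _)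
    have h5 : n * -|a| ≤ n * a := mul_le_mul_of_nonneg_left (neg_abs_le a) hn0
    linarith [hneg m n hn]
  · obtain ⟨q, hq1, hq2⟩ : ∃ q : ℕ, (q + 1) * N ≤ n ∧ n ≤ q * N + 2 * N := by
      have h3 : 2 ≤ n / N := (Nat.le_div_iff_mul_le (by omega)).2 hge
      refine ⟨n / N - 1, ?_, ?_⟩
      · rw [Nat.sub_add_cancel (by omega)]; exact Nat.div_mul_le_self n N
      · have h4 := Nat.lt_div_mul_add (a := n) (b := N) (by omega)
        have h5 : n / N * N = (n / N - 1) * N + N := by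
          rw [← Nat.succ_mul]; congr 1; omega
        omega
    have h3 := mul_le_sum_of_subadditive_array (H := fun i n => h n (T^[i] x)) hneg
      (fun i k l hk hl => by
        have := hsub i k l hk hl
        rwa [← Function.iterate_add_apply, add_comm k i] at this) hN (i := m) hq1
    have h4 := birkhoffSum_add T (h N) m (q * N) x
    have h5 : birkhoffSum T (h N) (q * N) (T^[m] x) =
        ∑ k ∈ Finset.range (q * N), h N (T^[m + k] x) :=
      Finset.sum_congr rfl fun k _ => by rw [← Function.iterate_add_apply, add_comm]
    have h6 := h₁ m
    have h7 := h₂ (m + q * N)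
    have h8 : ((q * N : ℕ) : ℝ) ≤ n := by
      exact_mod_cast (Nat.mul_le_mul_right N (Nat.le_succ q)).trans hq1
    have h9 : (n : ℝ) ≤ (q * N : ℕ) + 2 * N := by exact_mod_cast hq2
    set p : ℝ := ((q * N : ℕ) : ℝ) with hp
    have hcast : ((m + q * N : ℕ) : ℝ) = m + p := by push_cast [hp]; ring
    rw [hcast] at h7
    have h10 : N * h n (T^[m] x) ≤ p * c + (m + p) * (δ / 2) + m * (δ / 2) + M₁ + M₂ := by
      linarith
    have h11 : p * c ≤ p * (N * a) := mul_le_mul_of_nonneg_left ha (Nat.cast_nonneg _)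
    have h12 : p * a ≤ n * a + 2 * N * |a| := by
      have : (n - p) * -|a| ≤ (n - p) * a :=
        mul_le_mul_of_nonneg_left (neg_abs_le a) (by linarith)
      have : (n - p) * |a| ≤ 2 * N * |a| :=
        mul_le_mul_of_nonneg_right (by linarith) (abs_nonneg _)
      linarith
    have h13 : (m + p) * (δ / 2) + m * (δ / 2) ≤ (n + m) * δ := by nlinarith
    have h14 : (n + m) * δ + M₁ + M₂ ≤ N * ((n + m) * δ + M₁ + M₂) :=
      le_mul_of_one_le_left (by positivity) hN1
    have h15 : N * (p * a) ≤ N * (n * a + 2 * N * |a|) := mul_le_mul_of_nonneg_left h12 hN0.le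
    refine le_of_mul_le_mul_left ?_ hN0
    linarith

/-- Uniform control along orbits of a nonpositive subadditive process. -/
theorem NonposSubadditive.ae_exists_uniform_control {X : Type*} [MeasurableSpace X]
    {μ : Measure X} [IsProbabilityMeasure μ] {T : X → X} (hT : Ergodic T μ) {h : ℕ → X → ℝ}
    (hh : NonposSubadditive μ T h) (hint : ∀ n, 1 ≤ n → Integrable (h n) μ) {a : ℝ}
    (ha : ∀ n : ℕ, 1 ≤ n → n * a ≤ ∫ x, h n x ∂μ)
    (ha' : ∀ δ : ℝ, 0 < δ → ∃ N : ℕ, 1 ≤ N ∧ ∫ x, h N x ∂μ ≤ N * (a + δ))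
    {ε : ℝ} (hε : 0 < ε) :
    ∀ᵐ x ∂μ, ∃ n₀ : ℕ, 1 ≤ n₀ ∧ ∀ n : ℕ, n₀ ≤ n → ∀ m : ℕ, 1 ≤ m →
      n * a - (n + m) * ε ≤ h n (T^[m] x) ∧ h n (T^[m] x) ≤ n * a + (n + m) * ε := by
  have hδ : 0 < ε / 4 := by positivity
  obtain ⟨N, hN, hNa⟩ := ha' (ε / 4) hδ
  filter_upwards [hh.ae_exists_lower_bound hT hint ha (sub_lt_self a hδ),
    hh.ae_exists_upper_bound hT hN (hint N hN) hNa hδ, hh.subadd] with x ⟨M, hM⟩ ⟨E, hE⟩ hsub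
  obtain ⟨n₀, hn₀⟩ := exists_nat_ge ((M + |E|) / (ε / 4))
  refine ⟨n₀ + 1, by omega, fun n hn m hm => ?_⟩
  have hn0 : (0 : ℝ) ≤ n := Nat.cast_nonneg _
  have hm0 : (0 : ℝ) ≤ m := Nat.cast_nonneg _
  have h1 : M + |E| ≤ n * (ε / 4) := by
    rw [div_le_iff₀ hδ] at hn₀
    refine hn₀.trans (mul_le_mul_of_nonneg_right ?_ hδ.le)
    exact_mod_cast (by omega : n₀ ≤ n)
  have hM0 : (0 : ℝ) ≤ M := Nat.cast_nonneg _
  have hE1 := le_abs_self E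
  have hE0 := abs_nonneg E
  have hmε : 0 ≤ m * ε := by positivity
  constructor
  · have h2 := hM (n + m) (by omega)
    have h3 := hE m 0 hm
    have h4 := hsub m n hm (by omega)
    simp only [Function.iterate_zero, id, Nat.cast_zero, add_zero] at h3
    push_cast at h2
    linarith
  · have h2 := hE n m (by omega)
    linarith

theorem elog_of_pos {y : ℝ} (hy : 0 < y) : elog y = (Real.log y : EReal) :=
  ENNReal.log_ofReal_of_pos hy

theorem elog_of_nonpos {y : ℝ} (hy : y ≤ 0) : elog y = ⊥ := by
  simp [elog, ENNReal.log_ofReal, hy]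

theorem epos_coe (r : ℝ) : epos (r : EReal) = ENNReal.ofReal r := by simp [epos]

theorem ae_pos_of_lintegral_epos_neg_elog_ne_top {X : Type*} [MeasurableSpace X] {μ : Measure X}
    {f : X → ℝ} (hf : Measurable f) (h : ∫⁻ x, epos (-elog (f x)) ∂μ ≠ ⊤) :
    ∀ᵐ x ∂μ, 0 < f x := by
  have hS : MeasurableSet {x | f x ≤ 0} := measurableSet_le hf measurable_const
  have h1 : ∫⁻ x, {x | f x ≤ 0}.indicator (fun _ => (⊤ : ℝ≥0∞)) x ∂μ ≤
      ∫⁻ x, epos (-elog (f x)) ∂μ := by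
    refine lintegral_mono fun x => ?_
    by_cases hx : f x ≤ 0
    · simp [hx, elog_of_nonpos hx, epos]
    · simp [hx]
  rw [lintegral_indicator_const hS] at h1
  have h2 : μ {x | f x ≤ 0} = 0 := by
    by_contra h3
    rw [ENNReal.top_mul h3] at h1
    exact h (top_le_iff.1 h1)
  rw [measure_eq_zero_iff_ae_notMem] at h2
  filter_upwards [h2] with x hx
  simpa using hx

/-- If `f` is bounded above and `∫ log f` is not `-∞`, then `f` is positive almost everywhere,
`log f` is integrable and its integral has the expected value. -/
theorem eintegral_elog_eq_of_ne_bot {X : Type*} [MeasurableSpace X] {μ : Measure X}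
    [IsProbabilityMeasure μ] {f : X → ℝ} (hf : Measurable f) {K : ℝ}
    (hK : ∀ x, Real.log (f x) ≤ K) (h : eintegral μ (fun x => elog (f x)) ≠ ⊥) :
    (∀ᵐ x ∂μ, 0 < f x) ∧ Integrable (fun x => Real.log (f x)) μ ∧
      eintegral μ (fun x => elog (f x)) = ((∫ x, Real.log (f x) ∂μ : ℝ) : EReal) := by
  have hnt : ∫⁻ x, epos (-elog (f x)) ∂μ ≠ ⊤ := by
    intro htop
    apply h
    rw [eintegral, htop]
    exact EReal.sub_top _
  have hpos := ae_pos_of_lintegral_epos_neg_elog_ne_top hf hnt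
  have e1 : ∫⁻ x, epos (elog (f x)) ∂μ = ∫⁻ x, ENNReal.ofReal (Real.log (f x)) ∂μ :=
    lintegral_congr_ae <| by
      filter_upwards [hpos] with x hx; rw [elog_of_pos hx, epos_coe]
  have e2 : ∫⁻ x, epos (-elog (f x)) ∂μ = ∫⁻ x, ENNReal.ofReal (-Real.log (f x)) ∂μ :=
    lintegral_congr_ae <| by
      filter_upwards [hpos] with x hx; rw [elog_of_pos hx, ← EReal.coe_neg, epos_coe]
  have hfin : ∫⁻ x, ENNReal.ofReal (Real.log (f x)) ∂μ ≠ ⊤ := by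
    refine ne_top_of_le_ne_top (b := ENNReal.ofReal K) ENNReal.ofReal_ne_top ?_
    calc _ ≤ ∫⁻ _, ENNReal.ofReal K ∂μ :=
          lintegral_mono fun x => ENNReal.ofReal_le_ofReal (hK x)
      _ = _ := by simp
  have hlm : Measurable fun x => Real.log (f x) := hf.log
  have hint : Integrable (fun x => Real.log (f x)) μ := by
    refine ⟨hlm.aestronglyMeasurable, ?_⟩
    rw [hasFiniteIntegral_iff_norm]
    calc ∫⁻ x, ENNReal.ofReal ‖Real.log (f x)‖ ∂μ
        ≤ ∫⁻ x, (ENNReal.ofReal (Real.log (f x)) + ENNReal.ofReal (-Real.log (f x))) ∂μ := by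
          refine lintegral_mono fun x => ?_
          rcases le_total 0 (Real.log (f x)) with h0 | h0
          · rw [Real.norm_of_nonneg h0]; exact le_self_add
          · rw [Real.norm_of_nonpos h0]; exact le_add_self
      _ = _ := lintegral_add_left hlm.ennreal_ofReal _
      _ < ⊤ := by
        rw [← e2]; exact ENNReal.add_lt_top.2 ⟨hfin.lt_top, hnt.lt_top⟩
  refine ⟨hpos, hint, ?_⟩
  rw [integral_eq_lintegral_pos_part_sub_lintegral_neg_part hint, eintegral, e1, e2, EReal.coe_sub,
    EReal.coe_ennreal_toReal hfin, EReal.coe_ennreal_toReal (e2 ▸ hnt)]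

/-- The growth rate of a sequence that is subadditive is its infimum. -/
theorem mul_le_of_subadditive_of_tendsto {u : ℕ → ℝ} {a : ℝ}
    (hsub : ∀ m n, 1 ≤ m → 1 ≤ n → u (n + m) ≤ u m + u n)
    (hlim : Tendsto (fun n : ℕ => (n : ℝ)⁻¹ * u n) atTop (nhds a)) {n : ℕ} (hn : 1 ≤ n) :
    n * a ≤ u n := by
  have hn0 : (0 : ℝ) < n := by exact_mod_cast hn
  have h1 : ∀ k : ℕ, u ((k + 1) * n) ≤ (k + 1) * u n := by
    intro k
    induction k with
    | zero => simp
    | succ k ih =>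
      have h2 := hsub n ((k + 1) * n) hn (Nat.mul_pos k.succ_pos hn)
      rw [← Nat.succ_mul] at h2
      push_cast
      linarith
  have h3 : Tendsto (fun k : ℕ => (k + 1) * n) atTop atTop :=
    tendsto_atTop_mono (fun k => (Nat.le_succ k).trans (Nat.le_mul_of_pos_right _ hn)) tendsto_id
  have h4 : a ≤ (n : ℝ)⁻¹ * u n := by
    refine le_of_tendsto' (hlim.comp h3) fun k => ?_
    have hk : (0 : ℝ) < k + 1 := by positivity
    simp only [Function.comp, Nat.cast_mul, Nat.cast_add, Nat.cast_one]
    rw [mul_inv, mul_comm (_⁻¹) (_⁻¹), mul_assoc]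
    refine mul_le_mul_of_nonneg_left ?_ (inv_nonneg.2 hn0.le)
    rw [inv_mul_le_iff₀ hk]
    exact h1 k
  rwa [le_inv_mul_iff₀ hn0] at h4

/-- Proposition 2.3(i): if `α = lim (1/n) ∫ log f_n dμ ≠ -∞` for a subadditive
sequence of nonnegative functions over an ergodic system, then for every `ε > 0` and
a.e. `x` there is `n₀(x)` with `|log f_n(T^m x) - n α| ≤ (n+m) ε` for all `n ≥ n₀`
and all `m`. -/
theorem subadditive_ergodic_uniform_control {X : Type*} [MeasurableSpace X]
    (μ : Measure X) [IsProbabilityMeasure μ]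
    (T : X → X) (hT : Ergodic T μ) (f : ℕ → X → ℝ)
    (hmeas : ∀ n, Measurable (f n)) (hnonneg : ∀ n x, 0 ≤ f n x)
    (C : ℝ) (hC : ∀ x, f 1 x ≤ C)
    (hsub : ∀ m n : ℕ, 1 ≤ m → 1 ≤ n → ∀ x, f (n + m) x ≤ f m x * f n (T^[m] x))
    (α : EReal)
    (hα : Tendsto (fun n : ℕ => (((n : ℝ)⁻¹ : ℝ) : EReal) *
        eintegral μ (fun x => elog (f n x))) atTop (nhds α))
    (hα' : α ≠ ⊥) (ε : ℝ) (hε : 0 < ε) :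
    ∀ᵐ x ∂μ, ∃ n₀ : ℕ, 1 ≤ n₀ ∧ ∀ n : ℕ, n₀ ≤ n → ∀ m : ℕ, 1 ≤ m →
      ((n : ℝ) : EReal) * α - (((n + m : ℕ) : ℝ) * ε : ℝ) ≤ elog (f n (T^[m] x)) ∧
        elog (f n (T^[m] x)) ≤ ((n : ℝ) : EReal) * α + (((n + m : ℕ) : ℝ) * ε : ℝ) := by
  have hmp := hT.toMeasurePreserving
  set K := Real.log (max C 1)
  have hK0 : 0 ≤ K := Real.log_nonneg (le_max_right _ _)
  have hfK : ∀ n, 1 ≤ n → ∀ x, f n x ≤ Real.exp (n * K) := by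
    intro n hn
    have hexp : Real.exp K = max C 1 := Real.exp_log (by positivity)
    induction n, hn using Nat.le_induction with
    | base => intro x; simpa [hexp] using Or.inl (hC x)
    | succ n hn ih =>
      intro x
      have h1 : f 1 x ≤ Real.exp K := hexp ▸ (hC x).trans (le_max_left _ _)
      calc f (n + 1) x ≤ f 1 x * f n (T^[1] x) := hsub 1 n le_rfl hn x
        _ ≤ Real.exp K * Real.exp (n * K) :=
            mul_le_mul h1 (ih _) (hnonneg _ _) (Real.exp_pos _).le
        _ = _ := by rw [← Real.exp_add]; push_cast; ring_nf
  have hlogK : ∀ n, 1 ≤ n → ∀ x, Real.log (f n x) ≤ n * K := by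
    intro n hn x
    rcases (hnonneg n x).eq_or_lt with h0 | h0
    · rw [← h0, Real.log_zero]; positivity
    · exact (Real.log_le_iff_le_exp h0).2 (hfK n hn x)
  obtain ⟨n₁, hn₁⟩ : ∃ n₁ : ℕ, ∀ n, n₁ ≤ n → 1 ≤ n ∧
      eintegral μ (fun x => elog (f n x)) ≠ ⊥ := by
    have h1 := hα.eventually (lt_mem_nhds (bot_lt_iff_ne_bot.2 hα'))
    obtain ⟨n₁, h⟩ := eventually_atTop.1 (h1.and (eventually_ge_atTop 1))
    refine ⟨n₁, fun n hn => ⟨(h n hn).2, fun hbot => ?_⟩⟩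
    obtain ⟨h2, h3⟩ := h n hn
    rw [hbot, EReal.coe_mul_bot_of_pos (by have : (0 : ℝ) < n := by exact_mod_cast h3
                                           positivity)] at h2
    exact lt_irrefl _ h2
  have hlarge := fun n hn => eintegral_elog_eq_of_ne_bot (hmeas n) (hlogK n (hn₁ n hn).1)
    (hn₁ n hn).2
  have hpos : ∀ n, 1 ≤ n → ∀ᵐ x ∂μ, 0 < f n x := by
    intro n hn
    filter_upwards [(hlarge (n₁ + 1 + n) (by omega)).1] with x hx
    have h1 := hsub n (n₁ + 1) hn (by omega) x
    refine (hnonneg n x).lt_of_ne fun h0 => ?_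
    rw [← h0, zero_mul] at h1
    linarith
  have hposall : ∀ᵐ x ∂μ, ∀ i n, 1 ≤ n → 0 < f n (T^[i] x) := by
    refine hmp.ae_forall_iterate (p := fun x => ∀ n, 1 ≤ n → 0 < f n x) (ae_all_iff.2 fun n => ?_)
    by_cases hn : 1 ≤ n
    · filter_upwards [hpos n hn] with x hx _ using hx
    · exact .of_forall fun x h => absurd h hn
  let h : ℕ → X → ℝ := fun n x => Real.log (f n x) - n * K
  have hh : NonposSubadditive μ T h := by
    refine ⟨fun n => (hmeas n).log.sub_const _, .of_forall fun x n hn => ?_, ?_⟩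
    · have := hlogK n hn x
      simp only [h]; linarith
    · filter_upwards [hposall] with x hx m n hm hn
      have h1 := Real.log_le_log (hx 0 (n + m) (by omega)) (hsub m n hm hn x)
      have h2 : Real.log (f m x * f n (T^[m] x)) = _ :=
        Real.log_mul (hx 0 m hm).ne' (hx m n hn).ne'
      simp only [h, Nat.cast_add, Function.iterate_zero, id] at h1 h2 ⊢
      linarith
  have hint : ∀ n, 1 ≤ n → Integrable (h n) μ := by
    intro n hn
    have hbig : Integrable (h (n₁ + 1 + n)) μ :=
      (hlarge (n₁ + 1 + n) (by omega)).2.1.sub (integrable_const _)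
    refine hbig.mono (hh.measurable n).aestronglyMeasurable ?_
    filter_upwards [hh.subadd, hmp.ae_forall_iterate hh.nonpos] with x hx1 hx2
    have h1 := hx1 n (n₁ + 1) hn (by omega)
    have h2 := hx2 n (n₁ + 1) (by omega)
    have h3 := hx2 0 n hn
    have h4 := hx2 0 (n₁ + 1 + n) (by omega)
    simp only [Function.iterate_zero, id] at h3 h4
    rw [Real.norm_of_nonpos h3, Real.norm_of_nonpos h4]
    linarith
  have hintlog : ∀ n, 1 ≤ n → Integrable (fun x => Real.log (f n x)) μ := fun n hn => by
    refine ((hint n hn).add (integrable_const (n * K))).congr (.of_forall fun x => ?_)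
    simp [h]
  have hval : ∀ n, 1 ≤ n → ∫ x, h n x ∂μ = ∫ x, Real.log (f n x) ∂μ - n * K := fun n hn => by
    simp only [h]
    rw [integral_sub (hintlog n hn) (integrable_const _)]; simp
  have hlimE : Tendsto (fun n : ℕ => (((n : ℝ)⁻¹ * ∫ x, Real.log (f n x) ∂μ : ℝ) : EReal)) atTop
      (nhds α) := by
    refine hα.congr' ?_
    filter_upwards [eventually_ge_atTop n₁] with n hn
    rw [(hlarge n hn).2.2, EReal.coe_mul]
  have hαtop : α ≠ ⊤ := by
    have h1 : α ≤ (K : EReal) := by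
      refine le_of_tendsto hlimE ?_
      filter_upwards [eventually_ge_atTop 1] with n hn
      have hn0 : (0 : ℝ) < n := by exact_mod_cast hn
      rw [EReal.coe_le_coe_iff, inv_mul_le_iff₀ hn0]
      refine (integral_mono (hintlog n hn) (integrable_const _) (hlogK n hn)).trans ?_
      simp
    exact (h1.trans_lt (EReal.coe_lt_top K)).ne
  lift α to ℝ using ⟨hαtop, hα'⟩
  have hlim : Tendsto (fun n : ℕ => (n : ℝ)⁻¹ * ∫ x, h n x ∂μ) atTop (nhds (α - K)) := by
    refine ((EReal.tendsto_coe.1 hlimE).sub_const K).congr' ?_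
    filter_upwards [eventually_ge_atTop 1] with n hn
    have hn0 : (n : ℝ) ≠ 0 := by positivity
    rw [hval n hn]
    field_simp
  have hsubint : ∀ m n, 1 ≤ m → 1 ≤ n →
      ∫ x, h (n + m) x ∂μ ≤ ∫ x, h m x ∂μ + ∫ x, h n x ∂μ := by
    intro m n hm hn
    have hiter := hmp.iterate m
    have h1 : ∫ x, h n (T^[m] x) ∂μ = ∫ x, h n x ∂μ := by
      conv_rhs => rw [← hiter.map_eq]
      rw [integral_map hiter.measurable.aemeasurable (hh.measurable n).aestronglyMeasurable]
    have h2 : Integrable (fun x => h n (T^[m] x)) μ := hiter.integrable_comp_of_integrable (hint n hn)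
    rw [← h1, ← integral_add (hint m hm) h2]
    refine integral_mono_ae (hint _ (by omega)) ((hint m hm).add h2) ?_
    filter_upwards [hh.subadd] with x hx using hx m n hm hn
  have hupper : ∀ δ : ℝ, 0 < δ → ∃ N : ℕ, 1 ≤ N ∧ ∫ x, h N x ∂μ ≤ N * (α - K + δ) := by
    intro δ hδ
    obtain ⟨N, hN, hN1⟩ := ((hlim.eventually_lt_const (lt_add_of_pos_right _ hδ)).and
      (eventually_ge_atTop 1)).exists
    have hN0 : (0 : ℝ) < N := by exact_mod_cast hN1
    exact ⟨N, hN1, ((inv_mul_le_iff₀ hN0).1 hN.le)⟩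
  filter_upwards [hh.ae_exists_uniform_control hT hint
    (fun n hn => mul_le_of_subadditive_of_tendsto hsubint hlim hn) hupper hε, hposall]
    with x ⟨n₀, hn₀, hx⟩ hxpos
  refine ⟨n₀, hn₀, fun n hn m hm => ?_⟩
  obtain ⟨h1, h2⟩ := hx n hn m hm
  rw [elog_of_pos (hxpos m n (hn₀.trans hn)), ← EReal.coe_mul, ← EReal.coe_sub, ← EReal.coe_add,
    EReal.coe_le_coe_iff, EReal.coe_le_coe_iff]
  simp only [h] at h1 h2
  push_cast
  constructor <;> linarith
end

section
/- Let (X,F,μ) be a probability space, T: X → X an ergodic measure-preserving transformation, and {f_n} a sequence of non-negative measurable functions with sup_x f_1(x) < ∞ and f_{n+m}(x) ≤ f_m(x) f_n(T^m x) for all n, m, x. If α = lim_n (1/n)∫ log f_n dμ = −∞, then for every ε > 0, every N > 0 and μ-a.e. x there exists n_0(x) such that log f_n(T^m x) ≤ −Nn + (n+m)ε for all n ≥ n_0(x) and all m ∈ ℕ. -/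
open MeasureTheory Filter
open scoped ENNReal

/-- The running maximum `max_{k ≤ n} S_k h` of the Birkhoff sums of `h`, defined recursively. -/
noncomputable def maxBirkhoff {X : Type*} (T : X → X) (h : X → ℝ) : ℕ → X → ℝ
  | 0, _ => 0
  | n + 1, x => max 0 (h x + maxBirkhoff T h n (T x))

section MaxBirkhoff

variable {X : Type*} (T : X → X) (h : X → ℝ)

lemma maxBirkhoff_nonneg (n : ℕ) (x : X) : 0 ≤ maxBirkhoff T h n x := by
  cases n <;> simp [maxBirkhoff]

lemma maxBirkhoff_monotone (x : X) : Monotone (fun n => maxBirkhoff T h n x) := by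
  refine monotone_nat_of_le_succ fun n => ?_
  induction n generalizing x with
  | zero => exact maxBirkhoff_nonneg T h _ x
  | succ n ih =>
    have := ih (T x)
    simp only [maxBirkhoff] at this ⊢
    gcongr

lemma birkhoffSum_le_maxBirkhoff (n : ℕ) (x : X) :
    birkhoffSum T h n x ≤ maxBirkhoff T h n x := by
  induction n generalizing x with
  | zero => simp [maxBirkhoff]
  | succ n ih =>
    rw [birkhoffSum_succ']
    exact le_max_of_le_right (by linarith [ih (T x)])

lemma bddAbove_maxBirkhoff_apply_iff (x : X) :
    BddAbove (Set.range fun n => maxBirkhoff T h n (T x)) ↔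
      BddAbove (Set.range fun n => maxBirkhoff T h n x) := by
  constructor
  · rintro ⟨b, hb⟩
    refine ⟨max 0 (h x + b), ?_⟩
    rintro _ ⟨n, rfl⟩
    cases n with
    | zero => exact le_max_left _ _
    | succ n =>
      have : maxBirkhoff T h n (T x) ≤ b := hb ⟨n, rfl⟩
      simp only [maxBirkhoff]
      gcongr
  · rintro ⟨b, hb⟩
    refine ⟨b - h x, ?_⟩
    rintro _ ⟨n, rfl⟩
    have : max 0 (h x + maxBirkhoff T h n (T x)) ≤ b := hb ⟨n + 1, rfl⟩
    have := (le_max_right _ _).trans this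
    simp only
    linarith

variable {T h} [MeasurableSpace X] {μ : Measure X}

lemma measurable_maxBirkhoff (hT : Measurable T) (hh : Measurable h) (n : ℕ) :
    Measurable (maxBirkhoff T h n) := by
  induction n with
  | zero => exact measurable_const
  | succ n ih => exact measurable_const.max (hh.add (ih.comp hT))

lemma integrable_maxBirkhoff (hT : MeasurePreserving T μ μ) (hh : Integrable h μ) (n : ℕ) :
    Integrable (maxBirkhoff T h n) μ := by
  induction n with
  | zero => exact integrable_zero _ _ _
  | succ n ih =>
    exact (integrable_zero X ℝ μ).sup (hh.add (hT.integrable_comp_of_integrable ih))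

/-- A function of negative mean over an ergodic system has Birkhoff sums bounded above a.e. -/
lemma Ergodic.ae_bddAbove_birkhoffSum (hT : Ergodic T μ) (hh : Measurable h)
    (hi : Integrable h μ) (hneg : ∫ x, h x ∂μ < 0) :
    ∀ᵐ x ∂μ, ∃ D : ℝ, ∀ n, birkhoffSum T h n x ≤ D := by
  have hTm := hT.toMeasurePreserving
  set A : Set X := {x | BddAbove (Set.range fun n => maxBirkhoff T h n x)}
  have hA : MeasurableSet A :=
    measurableSet_bddAbove_range (measurable_maxBirkhoff hTm.measurable hh)
  have hAinv : T ⁻¹' A = A := by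
    ext x
    exact bddAbove_maxBirkhoff_apply_iff T h x
  rcases hT.toPreErgodic.ae_mem_or_ae_notMem hA hAinv with h1 | h1
  · filter_upwards [h1] with x ⟨b, hb⟩
    exact ⟨b, fun n => (birkhoffSum_le_maxBirkhoff T h n x).trans (hb ⟨n, rfl⟩)⟩
  · exfalso
    have key : ∀ n x, maxBirkhoff T h (n + 1) x - maxBirkhoff T h n (T x)
        = max (h x) (-maxBirkhoff T h n (T x)) := by
      intro n x
      rw [maxBirkhoff, ← max_sub_sub_right, max_comm, add_sub_cancel_right, zero_sub]
    have lim : Tendsto (fun n => ∫ x, max (h x) (-maxBirkhoff T h n (T x)) ∂μ) atTop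
        (nhds (∫ x, h x ∂μ)) := by
      refine tendsto_integral_of_dominated_convergence (fun x => |h x|) (fun n => ?_) hi.abs
        (fun n => ?_) ?_
      · exact (hh.max ((measurable_maxBirkhoff hTm.measurable hh n).comp
          hTm.measurable).neg).aestronglyMeasurable
      · refine ae_of_all _ fun x => ?_
        have := maxBirkhoff_nonneg T h n (T x)
        rw [Real.norm_eq_abs, abs_le]
        exact ⟨(neg_abs_le _).trans (le_max_left _ _),
          max_le (le_abs_self _) (by linarith [abs_nonneg (h x)])⟩
      · filter_upwards [h1] with x hx
        have hx' : ¬ BddAbove (Set.range fun n => maxBirkhoff T h n (T x)) := fun hb =>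
          hx ((bddAbove_maxBirkhoff_apply_iff T h x).1 hb)
        have ht := tendsto_atTop_atTop_of_monotone (maxBirkhoff_monotone T h (T x)) (fun b => by
          by_contra! hcon
          exact hx' ⟨b, by rintro _ ⟨n, rfl⟩; exact (hcon n).le⟩)
        refine tendsto_const_nhds.congr' ?_
        filter_upwards [ht.eventually_ge_atTop (-h x)] with n hn
        rw [max_eq_left]
        linarith
    refine absurd (ge_of_tendsto' lim fun n => ?_) (not_le.2 hneg)
    have hn := integrable_maxBirkhoff hTm hi
    simp_rw [← key]
    have hcomp : ∫ x, maxBirkhoff T h n (T x) ∂μ = ∫ x, maxBirkhoff T h n x ∂μ := by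
      have := integral_map (μ := μ) hTm.measurable.aemeasurable (f := maxBirkhoff T h n)
        (measurable_maxBirkhoff hTm.measurable hh n).aestronglyMeasurable
      rw [← this, hTm.map_eq]
    have hcompi : Integrable (fun x => maxBirkhoff T h n (T x)) μ :=
      hTm.integrable_comp_of_integrable (hn n)
    rw [integral_sub (hn _) hcompi, hcomp, sub_nonneg]
    exact integral_mono (hn _) (hn _) fun x => maxBirkhoff_monotone T h x n.le_succ

/-- Upper half of Birkhoff's theorem, with an explicit error. -/
lemma Ergodic.ae_birkhoffSum_le [IsProbabilityMeasure μ] (hT : Ergodic T μ) (hh : Measurable h)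
    (hi : Integrable h μ) {δ : ℝ} (hδ : 0 < δ) :
    ∀ᵐ x ∂μ, ∃ D : ℝ, ∀ n : ℕ, birkhoffSum T h n x ≤ n * (∫ x, h x ∂μ + δ) + D := by
  set c := ∫ x, h x ∂μ + δ with hc
  have := hT.ae_bddAbove_birkhoffSum (h := fun x => h x - c) (hh.sub_const c)
    (hi.sub (integrable_const c)) (by
      rw [integral_sub hi (integrable_const c)]
      simp [hc, hδ])
  filter_upwards [this] with x ⟨D, hD⟩
  refine ⟨D, fun n => ?_⟩
  have := hD n
  simp only [birkhoffSum, Finset.sum_sub_distrib, Finset.sum_const, Finset.card_range,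
    nsmul_eq_mul] at this ⊢
  linarith

/-- Birkhoff's ergodic theorem, with explicit two-sided error. -/
lemma Ergodic.ae_abs_birkhoffSum_sub_le [IsProbabilityMeasure μ] (hT : Ergodic T μ)
    (hh : Measurable h) (hi : Integrable h μ) {δ : ℝ} (hδ : 0 < δ) :
    ∀ᵐ x ∂μ, ∃ D : ℝ, ∀ n : ℕ, |birkhoffSum T h n x - n * ∫ x, h x ∂μ| ≤ n * δ + D := by
  filter_upwards [hT.ae_birkhoffSum_le hh hi hδ, hT.ae_birkhoffSum_le hh.neg hi.neg hδ]
    with x ⟨D, hD⟩ ⟨E, hE⟩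
  refine ⟨max D E, fun n => abs_le.2 ⟨?_, ?_⟩⟩
  · have := hE n
    have hE' := le_max_right D E
    simp only [birkhoffSum, Pi.neg_apply, Finset.sum_neg_distrib, integral_neg] at this ⊢
    linarith
  · linarith [hD n, le_max_left D E]

end MaxBirkhoff

lemma elog_le_coe_iff {x r : ℝ} : elog x ≤ (r : EReal) ↔ x ≤ Real.exp r := by
  rw [elog, ENNReal.log_ofReal]
  split_ifs with hx
  · simpa using hx.trans (Real.exp_pos r).le
  · rw [EReal.coe_le_coe_iff, Real.log_le_iff_le_exp (not_le.1 hx)]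

lemma measurable_elog : Measurable elog :=
  ENNReal.measurable_log.comp ENNReal.measurable_ofReal

lemma measurable_epos : Measurable epos :=
  Measurable.ite (measurableSet_singleton ⊤) measurable_const
    (ENNReal.measurable_ofReal.comp measurable_ereal_toReal)

lemma epos_le_of_le {e : EReal} {c : ℝ} (h : e ≤ c) : epos e ≤ ENNReal.ofReal c := by
  induction e with
  | bot => simp [epos]
  | top => simp at h
  | coe r => simpa [epos] using ENNReal.ofReal_le_ofReal (EReal.coe_le_coe_iff.1 h)

lemma le_epos_sub_min_epos_neg {e : EReal} (he : e ≠ ⊤) (L : ℝ≥0∞) :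
    e ≤ (((epos e).toReal - (min (epos (-e)) L).toReal : ℝ) : EReal) := by
  induction e with
  | bot => simp
  | top => simp at he
  | coe r =>
    have h1 : epos (r : EReal) = ENNReal.ofReal r := by simp [epos]
    have h2 : epos (-(r : EReal)) = ENNReal.ofReal (-r) := by
      rw [← EReal.coe_neg]; simp [epos]
    have h3 : (min (ENNReal.ofReal (-r)) L).toReal ≤ max (-r) 0 := by
      rw [← ENNReal.toReal_ofReal']
      exact ENNReal.toReal_mono ENNReal.ofReal_ne_top (min_le_left _ _)
    rw [EReal.coe_le_coe_iff, h1, h2, ENNReal.toReal_ofReal']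
    rcases le_total 0 r with h | h
    · rw [max_eq_right (by linarith)] at h3
      rw [max_eq_left h]
      linarith
    · rw [max_eq_left (by linarith)] at h3
      rw [max_eq_right h]
      linarith

/-- A function bounded above can be truncated from below to an integrable function without
increasing its integral past a given strict upper bound. -/
lemma exists_integrable_ge_of_eintegral_lt {X : Type*} [MeasurableSpace X] {μ : Measure X}
    [IsFiniteMeasure μ] {u : X → EReal} (hu : Measurable u) {c b : ℝ} (hc : ∀ x, u x ≤ c)
    (hb : eintegral μ u < b) :
    ∃ g : X → ℝ, Measurable g ∧ Integrable g μ ∧ (∀ x, u x ≤ g x) ∧ ∫ x, g x ∂μ < b := by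
  have hP : ∫⁻ x, epos (u x) ∂μ ≠ ⊤ := by
    refine ((lintegral_mono fun x => epos_le_of_le (hc x)).trans_lt ?_).ne
    rw [lintegral_const]
    exact ENNReal.mul_lt_top ENNReal.ofReal_lt_top (measure_lt_top _ _)
  have hm1 : Measurable fun x => epos (u x) := measurable_epos.comp hu
  have hm2 : Measurable fun x => epos (-u x) := measurable_epos.comp hu.neg
  have hmin : ∀ L : ℕ, Measurable fun x => min (epos (-u x)) (L : ℝ≥0∞) :=
    fun L => hm2.min measurable_const
  have hsup : ∫⁻ x, epos (-u x) ∂μ = ⨆ L : ℕ, ∫⁻ x, min (epos (-u x)) (L : ℝ≥0∞) ∂μ := by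
    rw [← lintegral_iSup hmin]
    · congr 1
      ext x
      rw [← inf_iSup_eq, ENNReal.iSup_natCast, inf_top_eq]
    · intro i j hij x
      exact min_le_min le_rfl (by exact_mod_cast hij)
  have hfin : ∀ L : ℕ, ∫⁻ x, min (epos (-u x)) (L : ℝ≥0∞) ∂μ ≠ ⊤ := fun L => by
    refine ((lintegral_mono fun x => min_le_right _ _).trans_lt ?_).ne
    rw [lintegral_const]
    exact ENNReal.mul_lt_top (ENNReal.natCast_lt_top L) (measure_lt_top _ _)
  obtain ⟨L, hL⟩ : ∃ L : ℕ, (∫⁻ x, epos (u x) ∂μ).toReal - b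
      < (∫⁻ x, min (epos (-u x)) (L : ℝ≥0∞) ∂μ).toReal := by
    rw [eintegral] at hb
    set P := ∫⁻ x, epos (u x) ∂μ
    set Q := ∫⁻ x, epos (-u x) ∂μ
    rcases lt_or_ge (P.toReal - b) 0 with hr | hr
    · exact ⟨0, hr.trans_le ENNReal.toReal_nonneg⟩
    · have hlt : ENNReal.ofReal (P.toReal - b) < Q := by
        by_contra! hcon
        have hQ : Q ≠ ⊤ := (hcon.trans_lt ENNReal.ofReal_lt_top).ne
        have hQr : Q.toReal ≤ P.toReal - b := ENNReal.toReal_le_of_le_ofReal hr hcon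
        rw [← EReal.coe_ennreal_toReal hP,
          ← EReal.coe_ennreal_toReal hQ, ← EReal.coe_sub, EReal.coe_lt_coe_iff] at hb
        linarith
      rw [hsup, lt_iSup_iff] at hlt
      obtain ⟨L, hL⟩ := hlt
      exact ⟨L, (ENNReal.ofReal_lt_iff_lt_toReal hr (hfin L)).1 hL⟩
  have hi1 := integrable_toReal_of_lintegral_ne_top hm1.aemeasurable hP
  have hi2 := integrable_toReal_of_lintegral_ne_top (hmin L).aemeasurable (hfin L)
  refine ⟨fun x => (epos (u x)).toReal - (min (epos (-u x)) (L : ℝ≥0∞)).toReal,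
    hm1.ennreal_toReal.sub (hmin L).ennreal_toReal, hi1.sub hi2, fun x => ?_, ?_⟩
  · exact le_epos_sub_min_epos_neg ((hc x).trans_lt (EReal.coe_lt_top c)).ne L
  · rw [integral_sub hi1 hi2, integral_toReal hm1.aemeasurable, integral_toReal
      (hmin L).aemeasurable]
    · linarith
    · exact ae_of_all _ fun x => (min_le_right _ _).trans_lt (ENNReal.natCast_lt_top L)
    · exact ae_lt_top hm1 hP

section Submultiplicative

variable {X : Type*} {T : X → X} {F : ℕ → X → ℝ}

lemma submultiplicative_le_exp_birkhoffSum_iterate (hF : ∀ n x, 0 ≤ F n x)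
    (hF0 : ∀ x, F 0 x ≤ 1) (hsub : ∀ m n x, F (n + m) x ≤ F m x * F n (T^[m] x))
    {p : ℕ} {g : X → ℝ} (hg : ∀ x, F p x ≤ Real.exp (g x)) (q : ℕ) (x : X) :
    F (q * p) x ≤ Real.exp (birkhoffSum T^[p] g q x) := by
  induction q generalizing x with
  | zero => simpa using hF0 x
  | succ q ih =>
    rw [birkhoffSum_succ', Real.exp_add, add_mul, one_mul]
    exact (hsub p (q * p) x).trans (mul_le_mul (hg x) (ih _) (hF _ _) (Real.exp_pos _).le)

lemma sum_birkhoffSum_iterate (g : X → ℝ) (p q : ℕ) (x : X) :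
    ∑ j ∈ Finset.range p, birkhoffSum T^[p] g q (T^[j] x) = birkhoffSum T g (q * p) x := by
  induction q generalizing x with
  | zero => simp
  | succ q ih =>
    have hcomm : ∀ j, T^[p] (T^[j] x) = T^[j] (T^[p] x) := fun j => by
      rw [← Function.iterate_add_apply, add_comm, Function.iterate_add_apply]
    simp_rw [birkhoffSum_succ', hcomm, Finset.sum_add_distrib, ih]
    rw [add_mul, one_mul, add_comm (q * p) p, birkhoffSum_add]
    rfl

/-- A submultiplicative cocycle of at most exponential growth is controlled by the Birkhoff sums
of a logarithmic majorant of any single term. -/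
lemma submultiplicative_le_exp_birkhoffSum (hF : ∀ n x, 0 ≤ F n x)
    {K : ℝ} (hK : 0 ≤ K) (hFK : ∀ n x, F n x ≤ Real.exp (n * K))
    (hsub : ∀ m n x, F (n + m) x ≤ F m x * F n (T^[m] x))
    {p : ℕ} (hp : p ≠ 0) {g : X → ℝ} (hg : ∀ x, F p x ≤ Real.exp (g x)) {n q : ℕ}
    (hqn : (q + 1) * p ≤ n) (hnq : n ≤ (q + 2) * p) (x : X) :
    F n x ≤ Real.exp (birkhoffSum T g (q * p) x / p + 3 * p * K) := by
  have hp' : (p : ℝ) ≠ 0 := by exact_mod_cast hp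
  have hj : ∀ j ∈ Finset.range p,
      F n x ≤ Real.exp (birkhoffSum T^[p] g q (T^[j] x) + 3 * p * K) := by
    intro j hj
    have hjp : j < p := Finset.mem_range.1 hj
    obtain ⟨r, rfl⟩ : ∃ r, n = (r + q * p) + j := ⟨n - q * p - j, by lia⟩
    have hr : r ≤ 2 * p := by lia
    have hr' : (r : ℝ) ≤ 2 * p := by exact_mod_cast hr
    have hj' : (j : ℝ) ≤ p := by exact_mod_cast hjp.le
    have h0 : ∀ y, F 0 y ≤ 1 := fun y => by simpa using hFK 0 y
    calc F ((r + q * p) + j) x ≤ F j x * F (r + q * p) (T^[j] x) := hsub _ _ _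
      _ ≤ F j x * (F (q * p) (T^[j] x) * F r (T^[q * p] (T^[j] x))) :=
        mul_le_mul_of_nonneg_left (hsub _ _ _) (hF _ _)
      _ ≤ Real.exp (j * K) * (Real.exp (birkhoffSum T^[p] g q (T^[j] x)) * Real.exp (r * K)) := by
        have h1 := submultiplicative_le_exp_birkhoffSum_iterate hF h0 hsub hg q (T^[j] x)
        have := hF
        gcongr
        · exact mul_nonneg (hF _ _) (hF _ _)
        · exact hFK _ _
        · exact hF _ _
        · exact hFK _ _
      _ ≤ _ := by
        rw [← Real.exp_add, ← Real.exp_add, Real.exp_le_exp]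
        nlinarith
  have hprod := Finset.prod_le_prod (fun _ _ => hF n x) hj
  rw [Finset.prod_const, Finset.card_range, ← Real.exp_sum, Finset.sum_add_distrib,
    sum_birkhoffSum_iterate, Finset.sum_const, Finset.card_range, nsmul_eq_mul] at hprod
  refine le_of_pow_le_pow_left₀ hp (Real.exp_pos _).le (hprod.trans_eq ?_)
  rw [← Real.exp_nat_mul]
  congr 1
  field_simp

end Submultiplicative

/-- Proposition 2.3(ii): if `α = lim (1/n) ∫ log f_n dμ = -∞` for a subadditive
sequence of nonnegative functions over an ergodic system, then for every `ε > 0`,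
`N > 0` and a.e. `x` there is `n₀(x)` with `log f_n(T^m x) ≤ -N n + (n+m) ε`
for all `n ≥ n₀` and all `m`. -/
theorem subadditive_ergodic_uniform_control_bot {X : Type*} [MeasurableSpace X]
    (μ : Measure X) [IsProbabilityMeasure μ]
    (T : X → X) (hT : Ergodic T μ) (f : ℕ → X → ℝ)
    (hmeas : ∀ n, Measurable (f n)) (hnonneg : ∀ n x, 0 ≤ f n x)
    (C : ℝ) (hC : ∀ x, f 1 x ≤ C)
    (hsub : ∀ m n : ℕ, 1 ≤ m → 1 ≤ n → ∀ x, f (n + m) x ≤ f m x * f n (T^[m] x))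
    (hα : Tendsto (fun n : ℕ => (((n : ℝ)⁻¹ : ℝ) : EReal) *
        eintegral μ (fun x => elog (f n x))) atTop (nhds (⊥ : EReal)))
    (ε : ℝ) (hε : 0 < ε) (N : ℝ) (hN : 0 < N) :
    ∀ᵐ x ∂μ, ∃ n₀ : ℕ, 1 ≤ n₀ ∧ ∀ n : ℕ, n₀ ≤ n → ∀ m : ℕ, 1 ≤ m →
      elog (f n (T^[m] x)) ≤ ((-(N * n) + ((n + m : ℕ) : ℝ) * ε : ℝ) : EReal) := by
  set F : ℕ → X → ℝ := fun n x => if n = 0 then 1 else f n x with hFdef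
  set K : ℝ := Real.log (max C 1)
  have hK : 0 ≤ K := Real.log_nonneg (le_max_right _ _)
  have hFf : ∀ {n}, n ≠ 0 → F n = f n := fun hn => by simp [hFdef, hn]
  have hF : ∀ n x, 0 ≤ F n x := fun n x => by
    simp only [hFdef]
    split_ifs
    exacts [zero_le_one, hnonneg n x]
  have hFsub : ∀ m n x, F (n + m) x ≤ F m x * F n (T^[m] x) := by
    intro m n x
    rcases Nat.eq_zero_or_pos m with rfl | hm
    · simp [hFdef]
    rcases Nat.eq_zero_or_pos n with rfl | hn
    · simp [hFdef]
    rw [hFf (by lia), hFf (by lia), hFf (by lia)]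
    exact hsub m n hm hn x
  have hF1 : ∀ x, F 1 x ≤ Real.exp K := fun x => by
    rw [hFf one_ne_zero, Real.exp_log (by positivity)]
    exact (hC x).trans (le_max_left _ _)
  have hFK : ∀ n x, F n x ≤ Real.exp (n * K) := fun n x => by
    have := submultiplicative_le_exp_birkhoffSum_iterate hF (by simp [hFdef]) hFsub
      (g := fun _ => K) hF1 n x
    simpa [birkhoffSum] using this
  obtain ⟨p, hp, hpα⟩ : ∃ p : ℕ, 1 ≤ p ∧
      eintegral μ (fun x => elog (f p x)) < ((-(N * p) : ℝ) : EReal) := by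
    have hev := hα.eventually_lt_const (EReal.bot_lt_coe (-N))
    obtain ⟨p, hlt, hp⟩ := (hev.and (eventually_ge_atTop 1)).exists
    refine ⟨p, hp, ?_⟩
    have hp0 : (0 : ℝ) < p := by exact_mod_cast hp
    by_contra! hcon
    refine absurd hlt (not_lt.2 ?_)
    calc ((-N : ℝ) : EReal) = (((p : ℝ)⁻¹ : ℝ) : EReal) * ((-(N * p) : ℝ) : EReal) := by
          rw [← EReal.coe_mul]; congr 1; field_simp
      _ ≤ _ := mul_le_mul_of_nonneg_left hcon (by exact_mod_cast (inv_pos.2 hp0).le)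
  have hp0 : (0 : ℝ) < p := by exact_mod_cast hp
  obtain ⟨g, hgm, hgi, hfg, hgint⟩ := exists_integrable_ge_of_eintegral_lt
    (measurable_elog.comp (hmeas p)) (c := p * K)
    (fun x => elog_le_coe_iff.2 (hFf (n := p) (by lia) ▸ hFK p x)) hpα
  have hFg : ∀ x, F p x ≤ Real.exp (g x) := fun x =>
    hFf (n := p) (by lia) ▸ elog_le_coe_iff.1 (hfg x)
  set a := ∫ x, g x ∂μ
  filter_upwards [hT.ae_abs_birkhoffSum_sub_le hgm hgi (δ := p * ε / 2) (by positivity)]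
    with x ⟨D, hD⟩
  obtain ⟨n₁, hn₁⟩ := exists_nat_ge ((3 * p * p * K + 2 * N * p * p + 2 * D) / (p * ε / 2))
  rw [div_le_iff₀ (by positivity)] at hn₁
  refine ⟨max n₁ (p + 1), by lia, fun n hn m _ => elog_le_coe_iff.2 ?_⟩
  have hnp : p ≤ n := by lia
  have hn' : (n₁ : ℝ) ≤ n := by exact_mod_cast (le_max_left _ _).trans hn
  obtain ⟨q, hqn, hnq⟩ : ∃ q, (q + 1) * p ≤ n ∧ n ≤ (q + 2) * p := by
    have h1 : 1 ≤ n / p := (Nat.one_le_div_iff hp).2 hnp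
    have h2 := Nat.div_add_mod n p
    have h3 := Nat.mod_lt n hp
    obtain ⟨q, hq⟩ := Nat.exists_eq_add_of_le' h1
    rw [hq] at h2
    have h4 : (q + 2) * p = p * (q + 1) + p := by ring
    exact ⟨q, by rw [mul_comm]; lia, by lia⟩
  rw [← hFf (n := n) (by lia)]
  refine (submultiplicative_le_exp_birkhoffSum hF hK hFK hFsub (by lia) hFg hqn hnq _).trans ?_
  rw [Real.exp_le_exp]
  have hadd := birkhoffSum_add T g m (q * p) x
  have hu := (abs_le.1 (hD (m + q * p))).2
  have hl := (abs_le.1 (hD m)).1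
  have hqn' : ((q : ℝ) + 1) * p ≤ n := by exact_mod_cast hqn
  have hnq' : (n : ℝ) ≤ (q + 2) * p := by exact_mod_cast hnq
  have hq0 : (0 : ℝ) ≤ q * p := by positivity
  push_cast at hu ⊢
  have hS : birkhoffSum T g (q * p) (T^[m] x) ≤
      q * p * a + (2 * m + q * p) * (p * ε / 2) + 2 * D := by
    linarith
  have ha : q * p * a ≤ (n - 2 * p) * -(N * p) := by
    have h1 : q * p * a ≤ q * p * -(N * p) := mul_le_mul_of_nonneg_left hgint.le hq0
    have h2 : 0 ≤ (q * p - (n - 2 * p)) * (N * p) := mul_nonneg (by linarith) (by positivity)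
    linarith
  have hpe : 0 < p * ε / 2 := by positivity
  have h4 : (q * p : ℝ) * (p * ε / 2) ≤ n * (p * ε / 2) :=
    mul_le_mul_of_nonneg_right (by linarith) hpe.le
  have h5 := mul_le_mul_of_nonneg_right hn' hpe.le
  rw [← le_sub_iff_add_le, div_le_iff₀ hp0]
  linarith
end
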